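/- There is a constant c > 0 such that for every n ≥ 1, the number of orbits of the conjugation action of G_n on M_n satisfies e^{-cn}·n^n ≤ (number of orbits) ≤ e^{cn}·n^n. Equivalently, the number of isomorphism classes of trivalent multigraphs with 2n vertices is n^n up to a factor exponential in n. -/

import Mathlib

/-- The set of fixed-point-free involutions of the half-edge set `Fin (2n) × Fin 3`,
encoding trivalent multigraphs on `2n` labeled vertices. -/
def Mset (n : ℕ) : Set (Equiv.Perm (Fin (2 * n) × Fin 3)) :=
  {f | f * f = 1 ∧ ∀ x, f x ≠ x}

/-- The group (as a set) of permutations of the half-edges that respect vertices: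
`σ` belongs to `Gset n` if there is a permutation `π` of the vertices such that the
vertex of `σ (v, i)` is `π v` for all half-edges `(v, i)`. -/
def Gset (n : ℕ) : Set (Equiv.Perm (Fin (2 * n) × Fin 3)) :=
  {σ | ∃ π : Equiv.Perm (Fin (2 * n)), ∀ p : Fin (2 * n) × Fin 3, (σ p).1 = π p.1}

/-- The set of orbits of the conjugation action of `Gset n` on `Mset n`. -/
def OrbitsSet (n : ℕ) : Set (Set (Equiv.Perm (Fin (2 * n) × Fin 3))) :=
  {S | ∃ f ∈ Mset n, S = {g | ∃ σ ∈ Gset n, σ * f * σ⁻¹ = g}}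

/-!
*Lower bound.* An orbit has at most `|G_n| ≤ (2n)! * 27 ^ (2n)` elements, while there are at least
`(3n)!` matchings, so the number of orbits is at least `(3n)! / |G_n| ≥ n! / 729 ^ n`.

*Upper bound.* By Hall's theorem every vertex can choose an incident edge of its own, which accounts
for `2n` of the `3n` edges. The other ends of the chosen edges define a self-map of the vertices,
and every self-map of a finite linear order becomes monotone on each of two complementary sets after
relabelling. There are only exponentially many such maps, and the remaining `n` edges can be placed
in at most `(6n) ^ n` ways.
-/

open Filter Function MulAction Set
open scoped Nat

section Counting

variable {ι α : Type*} [Finite ι]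

theorem ncard_le_card_mul_of_subset_iUnion [Finite α] {s : Set α} {r : ι → Set α} {k : ℕ}
    (hs : s ⊆ ⋃ i, r i) (hr : ∀ i, (r i).ncard ≤ k) : s.ncard ≤ Nat.card ι * k := by
  have := Fintype.ofFinite ι
  calc s.ncard ≤ (⋃ i, r i).ncard := ncard_le_ncard hs
    _ ≤ ∑ i, (r i).ncard := ncard_iUnion_le_of_fintype r
    _ ≤ ∑ _ : ι, k := Finset.sum_le_sum fun i _ ↦ hr i
    _ = Nat.card ι * k := by simp

theorem ncard_le_card_of_subset_range {s : Set α} {f : ι → α} (hs : s ⊆ range f) :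
    s.ncard ≤ Nat.card ι :=
  (ncard_le_ncard hs).trans (Finite.card_range_le f)

end Counting

section Orbits

variable {K X : Type*} [Group K] [MulAction K X] [Finite X] {M L : Set X}

theorem ncard_le_ncard_image_orbit_mul_card [Finite K] (M : Set X) :
    M.ncard ≤ (orbit K '' M).ncard * Nat.card K := by
  refine ncard_le_card_mul_of_subset_iUnion (r := fun S : orbit K '' M ↦ (S : Set X)) ?_ ?_
  · exact fun x hx ↦ mem_iUnion.2 ⟨⟨orbit K x, mem_image_of_mem _ hx⟩, mem_orbit_self x⟩
  · rintro ⟨_, x, -, rfl⟩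
    exact Finite.card_range_le fun k : K ↦ k • x

theorem ncard_image_orbit_le (h : ∀ x ∈ M, ∃ k : K, k • x ∈ L) :
    (orbit K '' M).ncard ≤ L.ncard := by
  have hsub : orbit K '' M ⊆ orbit K '' L := by
    rintro _ ⟨x, hx, rfl⟩
    obtain ⟨k, hk⟩ := h x hx
    exact ⟨k • x, hk, orbit_smul k x⟩
  exact (ncard_le_ncard hsub).trans ncard_image_le

end Orbits

/-! ### Self-maps of finite sets up to conjugation -/

/-- A function that is monotone on each of two complementary sets. -/
def IsTwoPieceMonotone {α β : Type*} [Preorder α] [Preorder β] (f : α → β) : Prop :=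
  ∃ E : Set α, MonotoneOn f E ∧ MonotoneOn f Eᶜ

-- A monotone `f : Fin m → Fin n` is recovered from the range of the strictly monotone `i + f i`.
theorem card_orderHom_fin_le (m n : ℕ) : Nat.card (Fin m →o Fin n) ≤ 2 ^ (m + n) := by
  let shift (f : Fin m →o Fin n) (i : Fin m) : Fin (m + n) := ⟨i + f i, by omega⟩
  have shift_strictMono (f) : StrictMono (shift f) := fun i j hij ↦
    Fin.mk_lt_mk.2 (add_lt_add_of_lt_of_le hij (f.monotone hij.le))
  have range_shift_injective : Injective fun f ↦ range (shift f) := by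
    intro f g hfg
    have hshift := ((shift_strictMono f).range_inj (shift_strictMono g)).1 hfg
    ext i
    simpa [shift] using congrFun hshift i
  simpa using Nat.card_le_card_of_injective _ range_shift_injective

theorem ncard_isTwoPieceMonotone_le (N : ℕ) [NeZero N] :
    {g : Fin N → Fin N | IsTwoPieceMonotone g}.ncard ≤ 32 ^ N := by
  classical
  have := Finite.of_injective (fun m : Fin N →o Fin N ↦ ⇑m) DFunLike.coe_injective
  let glue (x : Set (Fin N) × (Fin N →o Fin N) × (Fin N →o Fin N)) : Fin N → Fin N :=
    x.1.piecewise x.2.1 x.2.2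
  have hglue : {g : Fin N → Fin N | IsTwoPieceMonotone g} ⊆ range glue := by
    rintro g ⟨E, hE, hE'⟩
    obtain ⟨m, hm, hgm⟩ := hE.exists_monotone_extension (toFinite _).bddBelow (toFinite _).bddAbove
    obtain ⟨m', hm', hgm'⟩ :=
      hE'.exists_monotone_extension (toFinite _).bddBelow (toFinite _).bddAbove
    refine ⟨(E, ⟨m, hm⟩, ⟨m', hm'⟩), funext fun v ↦ ?_⟩
    by_cases hv : v ∈ E
    · simpa [glue, hv] using (hgm hv).symm
    · simpa [glue, hv] using (hgm' hv).symm
  calc _ ≤ Nat.card (Set (Fin N) × (Fin N →o Fin N) × (Fin N →o Fin N)) :=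
        ncard_le_card_of_subset_range hglue
    _ = 2 ^ N * (Nat.card (Fin N →o Fin N) * Nat.card (Fin N →o Fin N)) := by simp
    _ ≤ 2 ^ N * (2 ^ (N + N) * 2 ^ (N + N)) := by gcongr <;> exact card_orderHom_fin_le N N
    _ = 32 ^ N := by
      rw [show 32 = 2 ^ 5 by rfl, ← pow_mul, ← pow_add, ← pow_add]
      ring

theorem exists_invariant_mem_orbit {V : Type*} [Finite V] (g : V → V) :
    ∃ r : V → V, (∀ a, r (g a) = r a) ∧ ∀ a, ∃ i, g^[i] a = r a := by
  let limitSet (a : V) : Set V := {x | ∃ᶠ i in atTop, g^[i] a = x}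
  have limitSet_nonempty (a) : (limitSet a).Nonempty := by
    obtain ⟨x, hx⟩ := Finite.exists_infinite_fiber fun i ↦ g^[i] a
    exact ⟨x, Nat.frequently_atTop_iff_infinite.2 (infinite_coe_iff.1 hx)⟩
  have limitSet_apply (a) : limitSet (g a) = limitSet a := by
    ext x
    change (∃ᶠ i in atTop, g^[i + 1] a = x) ↔ ∃ᶠ i in atTop, g^[i] a = x
    conv_rhs => rw [← map_add_atTop_eq_nat 1, frequently_map]
  -- Choosing from the set `limitSet a` alone makes the choice the same for `a` and `g a`.
  choose pick hpick using fun S : {S : Set V // S.Nonempty} ↦ S.2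
  refine ⟨fun a ↦ pick ⟨limitSet a, limitSet_nonempty a⟩, fun a ↦ ?_, fun a ↦ ?_⟩
  · simp only [limitSet_apply]
  · exact (hpick ⟨limitSet a, limitSet_nonempty a⟩).exists

-- In base `N`, the digits of `h a` are the iterates of `g` at `a` until the first one in `R`.
theorem exists_mod_eq_and_div_eq {N : ℕ} (g : Fin N → Fin N) {R : Set (Fin N)}
    (hR : ∀ a, ∃ i, g^[i] a ∈ R) :
    ∃ h : Fin N → ℕ, ∀ a, h a % N = a ∧ (a ∉ R → h a / N = h (g a)) := by
  classical
  let depth (a : Fin N) : ℕ := Nat.find (hR a)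
  let h (a : Fin N) : ℕ := ∑ i ∈ Finset.range (depth a + 1), N ^ i * g^[i] a
  let q (a : Fin N) : ℕ := ∑ i ∈ Finset.range (depth a), N ^ i * g^[i] (g a)
  have h_eq (a) : h a = a + N * q a := by
    simp only [h, q, Finset.sum_range_succ' _ (depth a), Finset.mul_sum, pow_succ', mul_assoc,
      iterate_succ_apply, iterate_zero_apply, pow_zero, one_mul, add_comm (a : ℕ)]
  have depth_eq {a} (ha : a ∉ R) : depth a = depth (g a) + 1 := Nat.find_comp_succ _ _ ha
  refine ⟨h, fun a ↦ ⟨?_, fun ha ↦ ?_⟩⟩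
  · rw [h_eq, Nat.add_mul_mod_self_left, Nat.mod_eq_of_lt a.isLt]
  · rw [h_eq, Nat.add_mul_div_left _ _ a.pos, Nat.div_eq_of_lt a.isLt, zero_add]
    simp only [q, h, depth_eq ha]

-- Compare the roots first, then the base-`N` keys, on which `g` acts by deleting the last digit.
theorem exists_injective_key {N : ℕ} (g : Fin N → Fin N) :
    ∃ (κ : Fin N → Fin N ×ₗ ℕ) (E : Set (Fin N)), Injective κ ∧
      ∀ a b, (a ∈ E ↔ b ∈ E) → κ a < κ b → κ (g a) ≤ κ (g b) := by
  obtain ⟨r, hrg, hr⟩ := exists_invariant_mem_orbit g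
  have hrr (a) : r (r a) = r a := by
    obtain ⟨i, hi⟩ := hr a
    calc r (r a) = r (g^[i] a) := by rw [hi]
      _ = id^[i] (r a) := (Semiconj.iterate_right (gb := id) hrg i) a
      _ = r a := by rw [iterate_id, id]
  obtain ⟨h, hh⟩ := exists_mod_eq_and_div_eq g (R := {a | r a = a}) fun a ↦
    (hr a).imp fun i hi ↦ by rw [hi]; exact hrr a
  refine ⟨fun a ↦ toLex (r a, h a), {a | r a = a}, fun a b hab ↦ ?_, fun a b hE hab ↦ ?_⟩
  · have hhab : h a = h b := congrArg (fun x ↦ (ofLex x).2) hab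
    exact Fin.ext (by rw [← (hh a).1, ← (hh b).1, hhab])
  · simp only [Prod.Lex.toLex_lt_toLex, Prod.Lex.toLex_le_toLex, hrg] at hab ⊢
    refine hab.imp_right fun ⟨hroot, hlt⟩ ↦ ⟨hroot, ?_⟩
    by_cases ha : r a = a
    · have hb : r b = b := hE.1 ha
      rw [← ha, ← hb, hroot]
    · rw [← (hh a).2 ha, ← (hh b).2 (mt hE.2 ha)]
      exact Nat.div_le_div_right hlt.le

theorem exists_conj_isTwoPieceMonotone {N : ℕ} (g : Fin N → Fin N) :
    ∃ s : Equiv.Perm (Fin N), IsTwoPieceMonotone (s.symm ∘ g ∘ s) := by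
  obtain ⟨κ, E, hκ, hmono⟩ := exists_injective_key g
  let s := Tuple.sort κ
  have hκs : StrictMono (κ ∘ s) :=
    (Tuple.monotone_sort κ).strictMono_of_injective (hκ.comp s.injective)
  have hconj {a b} (hE : s a ∈ E ↔ s b ∈ E) (hab : a ≤ b) :
      (s.symm ∘ g ∘ s) a ≤ (s.symm ∘ g ∘ s) b := by
    rcases hab.eq_or_lt with rfl | hlt
    · exact le_rfl
    · rw [← hκs.le_iff_le]
      simpa using hmono (s a) (s b) hE (hκs hlt)
  exact ⟨s, s ⁻¹' E, fun a ha b hb ↦ hconj (iff_of_true ha hb),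
    fun a ha b hb ↦ hconj (iff_of_false ha hb)⟩

/-! ### Perfect matchings and transversals -/

/-- Perfect matchings of `α`, encoded as in `Mset` by the permutation exchanging the endpoints of
each edge. -/
def perfectMatchings (α : Type*) : Set (Equiv.Perm α) :=
  {f | Involutive f ∧ ∀ x, f x ≠ x}

/-- `T` contains exactly one endpoint of each edge `{x, f x}` of the matching `f`. -/
def IsTransversal {α : Type*} (f : α → α) (T : Set α) : Prop :=
  ∀ x, x ∈ T ↔ f x ∉ T

section Matchings

variable {α β V ι : Type*}

theorem permCongr_mem_perfectMatchings (e : α ≃ β) {f : Equiv.Perm α}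
    (hf : f ∈ perfectMatchings α) : e.permCongr f ∈ perfectMatchings β := by
  refine ⟨fun x ↦ ?_, fun x hx ↦ hf.2 (e.symm x) ?_⟩
  · simp only [Equiv.permCongr_apply, Equiv.symm_apply_apply, hf.1 _, Equiv.apply_symm_apply]
  · rwa [Equiv.permCongr_apply, ← Equiv.eq_symm_apply] at hx

-- A permutation `p` of `Fin m` matches the left copy of `p b` with the right copy of `b`.
theorem factorial_le_ncard_perfectMatchings [Finite α] {m : ℕ} (hα : Nat.card α = 2 * m) :
    m ! ≤ (perfectMatchings α).ncard := by
  have e : Fin m ⊕ Fin m ≃ α :=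
    finSumFinEquiv.trans ((finCongr (by rw [hα, two_mul])).trans (Finite.equivFin α).symm)
  let swapSides : Equiv.Perm (Fin m ⊕ Fin m) := Equiv.sumComm (Fin m) (Fin m)
  have hswap : swapSides ∈ perfectMatchings (Fin m ⊕ Fin m) :=
    ⟨by rintro (_ | _) <;> rfl, by rintro (_ | _) <;> simp [swapSides]⟩
  let sideMatching (p : Equiv.Perm (Fin m)) : perfectMatchings α :=
    ⟨e.permCongr ((Equiv.sumCongr p 1).permCongr swapSides),
      permCongr_mem_perfectMatchings e (permCongr_mem_perfectMatchings _ hswap)⟩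
  have hinj : Injective sideMatching := by
    intro p q hpq
    have h := e.permCongr.injective (Subtype.ext_iff.1 hpq)
    refine Equiv.ext fun b ↦ ?_
    simpa [swapSides] using Equiv.congr_fun h (Sum.inr b)
  simpa [Fintype.card_perm] using Nat.card_le_card_of_injective _ hinj

theorem exists_isTransversal_superset {f : α → α} (hf : Involutive f) (hfx : ∀ x, f x ≠ x)
    {Z : Set α} (hZ : ∀ x ∈ Z, f x ∉ Z) : ∃ T, Z ⊆ T ∧ IsTransversal f T := by
  obtain ⟨_, -⟩ := exists_wellFoundedLT α
  refine ⟨Z ∪ {x | x ∉ Z ∧ f x ∉ Z ∧ x < f x}, subset_union_left, fun x ↦ ?_⟩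
  have hZx := hZ x
  have hZfx := hZ (f x)
  have := (hfx x).lt_or_gt
  simp only [mem_union, mem_ofPred_eq, hf x] at hZfx ⊢
  grind

theorem IsTransversal.two_mul_ncard [Finite α] {f : α → α} (hf : Involutive f) {T : Set α}
    (hT : IsTransversal f T) : 2 * T.ncard = Nat.card α := by
  have himage : f '' T = Tᶜ := by
    rw [hf.image_eq_preimage_symm]
    ext x
    rw [mem_preimage, mem_compl_iff, hT x, not_not]
  rw [← ncard_add_ncard_compl T, ← himage, ncard_image_of_injective T hf.injective, two_mul]

theorem IsTransversal.eq_of_eqOn {f g : Equiv.Perm α} (hf : Involutive f) (hg : Involutive g)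
    {T : Set α} (hT : IsTransversal f T) (hfg : EqOn f g T) : f = g := by
  ext x
  by_cases hx : x ∈ T
  · exact hfg hx
  · have hfx : f x ∈ T := not_not.1 (mt (hT x).2 hx)
    rw [← hg.eq_iff, ← hfg hfx, hf x]

theorem ncard_eqOn_isTransversal_le [Finite α] (T Z : Set α) (F : α → α) :
    {f ∈ perfectMatchings α | IsTransversal f T ∧ EqOn f F Z}.ncard ≤
      Nat.card α ^ (T \ Z).ncard := by
  let S := {f ∈ perfectMatchings α | IsTransversal f T ∧ EqOn f F Z}
  have hinj : Injective fun (f : S) (x : ↥(T \ Z)) ↦ (f : Equiv.Perm α) x := by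
    rintro ⟨f, hf, hT, hfZ⟩ ⟨g, hg, _, hgZ⟩ hfg
    refine Subtype.ext (hT.eq_of_eqOn hf.1 hg.1 fun x hx ↦ ?_)
    by_cases hxZ : x ∈ Z
    · exact (hfZ hxZ).trans (hgZ hxZ).symm
    · exact congrFun hfg ⟨x, hx, hxZ⟩
  simpa [S, Nat.card_fun] using Nat.card_le_card_of_injective _ hinj

theorem card_filter_edge_eq_le_two [DecidableEq α] (f : α → α) (s : Finset α) (x : α) :
    (s.filter fun y ↦ s(y, f y) = s(x, f x)).card ≤ 2 := by
  have hsub : (s.filter fun y ↦ s(y, f y) = s(x, f x)) ⊆ {x, f x} := by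
    intro y hy
    have hyx : y ∈ s(x, f x) := (Finset.mem_filter.1 hy).2 ▸ Sym2.mem_mk_left y (f y)
    simpa using hyx
  exact (Finset.card_le_card hsub).trans Finset.card_le_two

-- Hall's condition holds: a vertex has at least two half-edges, and an edge consists of only two.
theorem exists_disjoint_choice [Finite ι] (hι : 2 ≤ Nat.card ι)
    {f : V × ι → V × ι} (hf : Involutive f) (hfx : ∀ x, f x ≠ x) :
    ∃ o : V → ι, ∀ x ∈ univ.graphOn o, f x ∉ univ.graphOn o := by
  classical
  have := Fintype.ofFinite ι
  let edge (x : V × ι) : Sym2 (V × ι) := s(x, f x)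
  let incident (v : V) : Finset (Sym2 (V × ι)) := Finset.univ.image fun i ↦ edge (v, i)
  have hall (s : Finset V) : s.card ≤ (s.biUnion incident).card := by
    have hbiUnion : (s ×ˢ (Finset.univ : Finset ι)).image edge = s.biUnion incident := by
      ext e
      simp [incident]
    have hedges := Finset.card_le_mul_card_image (f := edge) (s ×ˢ (Finset.univ : Finset ι)) 2
      fun e he ↦ by
        obtain ⟨x, -, rfl⟩ := Finset.mem_image.1 he
        exact card_filter_edge_eq_le_two f _ x
    rw [hbiUnion, Finset.card_product, Finset.card_univ, ← Nat.card_eq_fintype_card] at hedges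
    nlinarith
  obtain ⟨c, hc, hcmem⟩ := (Finset.all_card_le_biUnion_card_iff_exists_injective incident).1 hall
  have hc_edge (v : V) : ∃ i, edge (v, i) = c v := by simpa [incident] using hcmem v
  choose o ho using hc_edge
  refine ⟨o, ?_⟩
  rintro _ ⟨v, -, rfl⟩ ⟨w, -, hw⟩
  have hcvw : c w = c v := by
    rw [← ho w, ← ho v]
    simp only [edge] at hw ⊢
    rw [hw, hf, Sym2.eq_swap]
  obtain rfl := hc hcvw
  exact hfx _ hw.symm

end Matchings

/-! ### Matchings with a monotone choice of edges -/

/-- Perfect matchings of `Fin N × ι` in which every vertex can be assigned its own edge so that the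
map sending a vertex to the other end of its edge is monotone on two pieces. -/
def monotoneMatchings (N : ℕ) (ι : Type*) : Set (Equiv.Perm (Fin N × ι)) :=
  {f ∈ perfectMatchings (Fin N × ι) | ∃ o : Fin N → ι,
    (∀ x ∈ univ.graphOn o, f x ∉ univ.graphOn o) ∧
      IsTwoPieceMonotone fun v ↦ (f (v, o v)).1}

/-- The permutations of the half-edges `V × ι` that respect vertices, acting by conjugation. -/
def vertexSubgroup (V ι : Type*) : Subgroup (ConjAct (Equiv.Perm (V × ι))) where
  carrier := {σ | ∃ π : Equiv.Perm V, ∀ p, (ConjAct.ofConjAct σ p).1 = π p.1}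
  one_mem' := ⟨1, fun _ ↦ rfl⟩
  mul_mem' := by
    rintro σ τ ⟨π, hπ⟩ ⟨ρ, hρ⟩
    exact ⟨π * ρ, fun p ↦ by simp [hπ, hρ]⟩
  inv_mem' := by
    rintro σ ⟨π, hπ⟩
    exact ⟨π⁻¹, fun p ↦ by
      simpa [Equiv.eq_symm_apply] using (hπ ((ConjAct.ofConjAct σ)⁻¹ p)).symm⟩

section MonotoneMatchings

variable {N : ℕ} {V ι : Type*} [Finite ι]

theorem ncard_monotoneMatchings_le [NeZero N] {m : ℕ} (hm : N * Nat.card ι = 2 * (N + m)) :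
    (monotoneMatchings N ι).ncard ≤
      Nat.card ι ^ N * (Nat.card ι ^ N * (32 ^ N * 2 ^ (N * Nat.card ι))) *
        (N * Nat.card ι) ^ m := by
  let Code := (Fin N → ι) × (Fin N → ι) × {g : Fin N → Fin N | IsTwoPieceMonotone g} ×
    Set (Fin N × ι)
  let matchingsWithCode : Code → Set (Equiv.Perm (Fin N × ι)) := fun (o, j, g, T) ↦
    {f ∈ perfectMatchings (Fin N × ι) | univ.graphOn o ⊆ T ∧ IsTransversal f T ∧
      EqOn f (fun x ↦ (g.1 x.1, j x.1)) (univ.graphOn o)}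
  have card_code : Nat.card Code ≤
      Nat.card ι ^ N * (Nat.card ι ^ N * (32 ^ N * 2 ^ (N * Nat.card ι))) := by
    simp only [Code, Nat.card_prod, Nat.card_fun, Nat.card_coe_set_eq, Nat.card_eq_fintype_card,
      Fintype.card_fin]
    gcongr
    · exact ncard_isTwoPieceMonotone_le N
    · have := Fintype.ofFinite ι
      simp
  have hcover : monotoneMatchings N ι ⊆ ⋃ x, matchingsWithCode x := by
    rintro f ⟨hf, o, ho, hmono⟩
    obtain ⟨T, hoT, hT⟩ := exists_isTransversal_superset hf.1 hf.2 ho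
    refine mem_iUnion.2 ⟨(o, fun v ↦ (f (v, o v)).2, ⟨_, hmono⟩, T), hf, hoT, hT, ?_⟩
    rintro _ ⟨v, -, rfl⟩
    rfl
  have hcode (x) : (matchingsWithCode x).ncard ≤ (N * Nat.card ι) ^ m := by
    obtain ⟨o, j, g, T⟩ := x
    rcases (matchingsWithCode (o, j, g, T)).eq_empty_or_nonempty with h | ⟨f, hf, hoT, hT, -⟩
    · simp [h]
    have hTcard : (T \ univ.graphOn o).ncard = m := by
      have := hT.two_mul_ncard hf.1
      simp only [ncard_sdiff hoT, ncard_graphOn, ncard_univ, Nat.card_prod, Nat.card_fin] at this ⊢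
      omega
    calc _ ≤ {f ∈ perfectMatchings (Fin N × ι) | IsTransversal f T ∧
          EqOn f (fun x ↦ (g.1 x.1, j x.1)) (univ.graphOn o)}.ncard :=
          ncard_le_ncard fun f hf ↦ ⟨hf.1, hf.2.2⟩
      _ ≤ Nat.card (Fin N × ι) ^ (T \ univ.graphOn o).ncard := ncard_eqOn_isTransversal_le _ _ _
      _ = (N * Nat.card ι) ^ m := by rw [hTcard, Nat.card_prod, Nat.card_fin]
  exact (ncard_le_card_mul_of_subset_iUnion hcover hcode).trans (Nat.mul_le_mul_right _ card_code)

theorem exists_smul_mem_monotoneMatchings (hι : 2 ≤ Nat.card ι) {f : Equiv.Perm (Fin N × ι)}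
    (hf : f ∈ perfectMatchings (Fin N × ι)) :
    ∃ σ : vertexSubgroup (Fin N) ι, σ • f ∈ monotoneMatchings N ι := by
  obtain ⟨o, ho⟩ := exists_disjoint_choice hι hf.1 hf.2
  obtain ⟨s, hs⟩ := exists_conj_isTwoPieceMonotone fun v ↦ (f (v, o v)).1
  let relabel : Equiv.Perm (Fin N × ι) := s.symm.prodCongr (Equiv.refl ι)
  refine ⟨⟨ConjAct.toConjAct relabel, s.symm, fun _ ↦ rfl⟩, ?_⟩
  rw [Subgroup.smul_def, ConjAct.smul_def, ConjAct.ofConjAct_toConjAct, ← Equiv.permCongr_eq_mul]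
  refine ⟨permCongr_mem_perfectMatchings relabel hf, o ∘ s, ?_, hs⟩
  rintro _ ⟨v, -, rfl⟩ hv
  refine ho (s v, o (s v)) (by simp) ?_
  simpa [relabel] using hv

theorem ncard_orbit_perfectMatchings_le [NeZero N] (hι : 2 ≤ Nat.card ι) {m : ℕ}
    (hm : N * Nat.card ι = 2 * (N + m)) :
    (orbit (vertexSubgroup (Fin N) ι) '' perfectMatchings (Fin N × ι)).ncard ≤
      Nat.card ι ^ N * (Nat.card ι ^ N * (32 ^ N * 2 ^ (N * Nat.card ι))) *
        (N * Nat.card ι) ^ m :=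
  (ncard_image_orbit_le fun _ hf ↦ exists_smul_mem_monotoneMatchings hι hf).trans
    (ncard_monotoneMatchings_le hm)

theorem card_vertexSubgroup_le [Finite V] :
    Nat.card (vertexSubgroup V ι) ≤
      (Nat.card V)! * (Nat.card ι ^ Nat.card ι) ^ Nat.card V := by
  choose π hπ using fun σ : vertexSubgroup V ι ↦ σ.2
  let label (σ : vertexSubgroup V ι) (v : V) (i : ι) : ι := (ConjAct.ofConjAct σ.1 (v, i)).2
  have hinj : Injective fun σ ↦ (π σ, label σ) := by
    intro σ τ hστ
    have hπ_eq : π σ = π τ := congrArg Prod.fst hστ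
    have hlabel : label σ = label τ := congrArg Prod.snd hστ
    refine Subtype.ext (ConjAct.ofConjAct.injective (Equiv.ext fun p ↦ Prod.ext ?_ ?_))
    · rw [hπ σ, hπ τ, hπ_eq]
    · exact congrFun (congrFun hlabel p.1) p.2
  simpa [Nat.card_perm, Nat.card_fun] using Nat.card_le_card_of_injective _ hinj

end MonotoneMatchings

section Trivalent

variable (n : ℕ)

theorem mset_eq_perfectMatchings : Mset n = perfectMatchings (Fin (2 * n) × Fin 3) := by
  ext f
  simp [Mset, perfectMatchings, Involutive, Equiv.ext_iff]

theorem orbitsSet_eq_image_orbit :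
    OrbitsSet n =
      orbit (vertexSubgroup (Fin (2 * n)) (Fin 3)) '' perfectMatchings (Fin (2 * n) × Fin 3) := by
  have horbit (f) : {g | ∃ σ ∈ Gset n, σ * f * σ⁻¹ = g} =
      orbit (vertexSubgroup (Fin (2 * n)) (Fin 3)) f :=
    Set.ext fun g ↦
      ⟨fun ⟨σ, hσ, hg⟩ ↦ ⟨⟨ConjAct.toConjAct σ, hσ⟩, hg⟩, fun ⟨σ, hg⟩ ↦ ⟨_, σ.2, hg⟩⟩
  ext S
  simp only [OrbitsSet, mset_eq_perfectMatchings, horbit, mem_image, mem_ofPred_eq,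
    eq_comm (a := S)]

-- `31850496 = (3 * 3 * 32 * 2 ^ 3) ^ 2 * 6`
theorem card_orbitsSet_le [NeZero n] : Nat.card (OrbitsSet n) ≤ 31850496 ^ n * n ^ n := by
  rw [Nat.card_coe_set_eq, orbitsSet_eq_image_orbit]
  have h := ncard_orbit_perfectMatchings_le (N := 2 * n) (ι := Fin 3) (m := n) (by simp)
    (by rw [Nat.card_fin]; ring)
  rw [Nat.card_fin] at h
  refine h.trans_eq ?_
  rw [show 2 * n * 3 = 6 * n by ring]
  simp only [pow_mul, ← mul_assoc, ← mul_pow]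
  norm_num

theorem factorial_le_mul_card_orbitsSet : n ! ≤ 729 ^ n * Nat.card (OrbitsSet n) := by
  rw [Nat.card_coe_set_eq, orbitsSet_eq_image_orbit]
  set orbits := orbit (vertexSubgroup (Fin (2 * n)) (Fin 3)) ''
    perfectMatchings (Fin (2 * n) × Fin 3)
  have hfactorial : n ! * (2 * n)! ≤ (n + 2 * n)! :=
    Nat.le_of_dvd (Nat.factorial_pos _) (Nat.factorial_mul_factorial_dvd_factorial_add _ _)
  have hmatchings : (n + 2 * n)! ≤ (perfectMatchings (Fin (2 * n) × Fin 3)).ncard :=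
    factorial_le_ncard_perfectMatchings (by rw [Nat.card_prod, Nat.card_fin, Nat.card_fin]; ring)
  have hgroup : Nat.card (vertexSubgroup (Fin (2 * n)) (Fin 3)) ≤ (2 * n)! * 729 ^ n := by
    simpa [pow_mul] using card_vertexSubgroup_le (V := Fin (2 * n)) (ι := Fin 3)
  refine Nat.le_of_mul_le_mul_right ?_ (Nat.factorial_pos (2 * n))
  calc n ! * (2 * n)! ≤ (perfectMatchings (Fin (2 * n) × Fin 3)).ncard :=
        hfactorial.trans hmatchings
    _ ≤ orbits.ncard * Nat.card (vertexSubgroup (Fin (2 * n)) (Fin 3)) :=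
      ncard_le_ncard_image_orbit_mul_card _
    _ ≤ orbits.ncard * ((2 * n)! * 729 ^ n) := by gcongr
    _ = 729 ^ n * orbits.ncard * (2 * n)! := by ring

theorem pow_self_le_exp_mul_factorial : (n : ℝ) ^ n ≤ Real.exp n * n ! := by
  rw [← div_le_iff₀ (by positivity)]
  exact Real.pow_div_factorial_le_exp n (Nat.cast_nonneg n) n

theorem pow_self_le_mul_card_orbitsSet :
    (n : ℝ) ^ n ≤ 2187 ^ n * Nat.card (OrbitsSet n) := by
  calc (n : ℝ) ^ n ≤ Real.exp n * n ! := pow_self_le_exp_mul_factorial n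
    _ ≤ 3 ^ n * (729 ^ n * Nat.card (OrbitsSet n)) := by
      gcongr
      · rw [← Real.exp_one_pow]
        gcongr
        exact Real.exp_one_lt_three.le
      · exact_mod_cast factorial_le_mul_card_orbitsSet n
    _ = 2187 ^ n * Nat.card (OrbitsSet n) := by rw [← mul_assoc, ← mul_pow]; norm_num

end Trivalent

/-- There is a constant `c > 0` such that for every `n ≥ 1`, the number of orbits of the
conjugation action of `G_n` on `M_n` (equivalently, the number of isomorphism classes of
trivalent multigraphs with `2n` vertices) lies between `e^{-cn} · n^n` and `e^{cn} · n^n`. -/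
theorem num_trivalent_graphs_asymptotics :
    ∃ c : ℝ, 0 < c ∧ ∀ n : ℕ, 1 ≤ n →
      Real.exp (-c * n) * (n : ℝ) ^ n ≤ (Nat.card (OrbitsSet n) : ℝ) ∧
      (Nat.card (OrbitsSet n) : ℝ) ≤ Real.exp (c * n) * (n : ℝ) ^ n := by
  refine ⟨Real.log 31850496, Real.log_pos (by norm_num), fun n hn ↦ ?_⟩
  have := NeZero.of_pos (Nat.zero_lt_of_lt hn)
  have hexp : Real.exp (Real.log 31850496 * n) = 31850496 ^ n := by
    rw [mul_comm, Real.exp_nat_mul, Real.exp_log (by norm_num)]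
  constructor
  · rw [neg_mul, Real.exp_neg, hexp, inv_mul_le_iff₀ (by positivity)]
    exact (pow_self_le_mul_card_orbitsSet n).trans (by gcongr; norm_num)
  · rw [hexp]
    exact_mod_cast card_orbitsSet_le n
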